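/- Let n ≥ 1, r > 0, and let f : ℂⁿ → [0, ∞] be measurable. Then ∫_{B_r(0) ⊆ ℂⁿ} f dV = (1/2π) ∫_{S^{2n−1}} ( ∫_{B_r(0) ⊆ ℂ} |w|^{2n−2} f(λ w) dA(w) ) dσ(λ), where the inner integral is over the disk of radius r in ℂ and λ w denotes the scalar multiple of λ ∈ ℂⁿ by w ∈ ℂ. -/

import Mathlib

open MeasureTheory ENNReal

noncomputable instance (n : ℕ) : MeasurableSpace (EuclideanSpace ℂ (Fin n)) :=
  MeasurableSpace.comap WithLp.ofLp MeasurableSpace.pi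

instance (n : ℕ) : BorelSpace (EuclideanSpace ℂ (Fin n)) := PiLp.borelSpace ..

/-- Multiplication by a unit complex number preserves Lebesgue measure on `ℂⁿ`. -/
lemma measurePreserving_unit_smul (n : ℕ) (c : ℂ) (hc : ‖c‖ = 1) :
    MeasurePreserving (fun z : EuclideanSpace ℂ (Fin n) => c • z) volume volume := by
  have hc0 : c ≠ 0 := by
    rintro rfl
    simp at hc
  let e : EuclideanSpace ℂ (Fin n) ≃ₗᵢ[ℝ] EuclideanSpace ℂ (Fin n) :=
    { toFun := fun z => c • z
      invFun := fun z => c⁻¹ • z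
      left_inv := fun z => by simp [smul_smul, hc0]
      right_inv := fun z => by simp [smul_smul, hc0]
      map_add' := fun x y => smul_add _ _ _
      map_smul' := fun a x => smul_comm _ _ _
      norm_map' := fun x => by
        change ‖c • x‖ = ‖x‖
        rw [norm_smul, hc, one_mul] }
  exact e.measurePreserving

/-- The unit complex number with argument `θ`. -/
noncomputable def unitArg (θ : ℝ) : ℂ := (Real.cos θ : ℂ) + (Real.sin θ : ℂ) * Complex.I

lemma norm_unitArg (θ : ℝ) : ‖unitArg θ‖ = 1 := by
  have h := Complex.norm_polarCoord_symm (1, θ)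
  rw [Complex.polarCoord_symm_apply] at h
  simpa [unitArg] using h

lemma continuous_unitArg : Continuous unitArg := by
  unfold unitArg
  fun_prop

/-- Polar coordinates in the plane, as an iterated integral. -/
lemma lintegral_polar_iterated (g : ℂ → ℝ≥0∞) (hg : Measurable g) :
    ∫⁻ w, g w = ∫⁻ t in Set.Ioi (0 : ℝ), ENNReal.ofReal t *
      ∫⁻ θ in Set.Ioo (-Real.pi) Real.pi, g (t * unitArg θ) := by
  have hm : Measurable fun p : ℝ × ℝ => (p.1 : ℂ) * unitArg p.2 := by
    have := continuous_unitArg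
    exact Continuous.measurable (by fun_prop)
  rw [← Complex.lintegral_comp_polarCoord_symm,
    show polarCoord.target = Set.Ioi (0 : ℝ) ×ˢ Set.Ioo (-Real.pi) Real.pi from rfl, Measure.volume_eq_prod,
    ← Measure.prod_restrict, lintegral_prod]
  · refine lintegral_congr fun t => ?_
    rw [← lintegral_const_mul]
    · simp only [Complex.polarCoord_symm_apply, smul_eq_mul, unitArg]
    · exact hg.comp (hm.comp measurable_prodMk_left)
  · simp only [Complex.polarCoord_symm_apply, smul_eq_mul]
    exact (measurable_fst.ennreal_ofReal.mul (hg.comp hm)).aemeasurable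

/-- For `n ≥ 1`, `r > 0`, and measurable `f : ℂⁿ → [0,∞]`,
`∫_{B_r(0) ⊆ ℂⁿ} f dV = (1/2π) ∫_{S^{2n−1}} ∫_{B_r(0) ⊆ ℂ} |w|^{2n−2} f(λw) dA(w) dσ(λ)`,
where `σ` is the surface measure on the unit sphere of `ℂⁿ`, normalized so that the
polar-coordinates formula
`∫_{ℝ^{2n}} g dV = ∫_{S^{2n−1}} ∫_0^∞ t^{2n−1} g(tλ) dt dσ(λ)` holds. -/
theorem stmt_9 (n : ℕ) (hn : 1 ≤ n) (r : ℝ) (hr : 0 < r)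
    (f : EuclideanSpace ℂ (Fin n) → ℝ≥0∞) (hf : Measurable f)
    (σ : Measure (Metric.sphere (0 : EuclideanSpace ℂ (Fin n)) 1))
    (hσ : ∀ g : EuclideanSpace ℂ (Fin n) → ℝ≥0∞, Measurable g →
      ∫⁻ x, g x =
        ∫⁻ v : Metric.sphere (0 : EuclideanSpace ℂ (Fin n)) 1,
          (∫⁻ t in Set.Ioi (0 : ℝ),
            ENNReal.ofReal (t ^ (2 * n - 1)) * g (t • (v : EuclideanSpace ℂ (Fin n)))) ∂σ) :
    ∫⁻ z in Metric.ball (0 : EuclideanSpace ℂ (Fin n)) r, f z =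
      (ENNReal.ofReal (2 * Real.pi))⁻¹ *
        ∫⁻ v : Metric.sphere (0 : EuclideanSpace ℂ (Fin n)) 1,
          (∫⁻ w in Metric.ball (0 : ℂ) r,
            ENNReal.ofReal (‖w‖ ^ (2 * n - 2)) *
              f (w • (v : EuclideanSpace ℂ (Fin n)))) ∂σ := by
  set F : EuclideanSpace ℂ (Fin n) → ℝ≥0∞ := (Metric.ball 0 r).indicator f with hF
  have hFm : Measurable F := hf.indicator measurableSet_ball
  have hc := continuous_unitArg
  have hFm2 : Measurable fun p : EuclideanSpace ℂ (Fin n) × ℝ => F (unitArg p.2 • p.1) :=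
    hFm.comp (Continuous.measurable (by fun_prop))
  have hmθ : ∀ z : EuclideanSpace ℂ (Fin n), Measurable fun θ : ℝ => F (unitArg θ • z) :=
    fun z => hFm.comp (Continuous.measurable (by fun_prop))
  have hGm : Measurable fun z : EuclideanSpace ℂ (Fin n) =>
      ∫⁻ θ in Set.Ioo (-Real.pi) Real.pi, F (unitArg θ • z) :=
    hFm2.lintegral_prod_right'
  have hG : ∫⁻ z : EuclideanSpace ℂ (Fin n), ∫⁻ θ in Set.Ioo (-Real.pi) Real.pi,
      F (unitArg θ • z) = ENNReal.ofReal (2 * Real.pi) * ∫⁻ z, F z := by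
    rw [lintegral_lintegral_swap hFm2.aemeasurable]
    have : ∀ θ : ℝ, ∫⁻ z, F (unitArg θ • z) = ∫⁻ z, F z := fun θ =>
      (measurePreserving_unit_smul n _ (norm_unitArg θ)).lintegral_comp hFm
    simp_rw [this]
    rw [lintegral_const, Measure.restrict_apply_univ, Real.volume_Ioo, mul_comm]
    congr 2
    ring
  have key : ∀ v : Metric.sphere (0 : EuclideanSpace ℂ (Fin n)) 1,
      (∫⁻ w in Metric.ball (0 : ℂ) r, ENNReal.ofReal (‖w‖ ^ (2 * n - 2)) *
        f (w • (v : EuclideanSpace ℂ (Fin n)))) =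
      ∫⁻ t in Set.Ioi (0 : ℝ), ENNReal.ofReal (t ^ (2 * n - 1)) *
        ∫⁻ θ in Set.Ioo (-Real.pi) Real.pi,
          F (unitArg θ • t • (v : EuclideanSpace ℂ (Fin n))) := by
    intro v
    have hv : ‖(v : EuclideanSpace ℂ (Fin n))‖ = 1 := by simp
    have hmv : Measurable fun w : ℂ => F (w • (v : EuclideanSpace ℂ (Fin n))) :=
      hFm.comp (Continuous.measurable (by fun_prop))
    rw [← lintegral_indicator measurableSet_ball]
    have h1 : (Metric.ball (0 : ℂ) r).indicator (fun w => ENNReal.ofReal (‖w‖ ^ (2 * n - 2)) *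
        f (w • (v : EuclideanSpace ℂ (Fin n)))) =
        fun w => ENNReal.ofReal (‖w‖ ^ (2 * n - 2)) *
          F (w • (v : EuclideanSpace ℂ (Fin n))) := by
      funext w
      by_cases hw : ‖w‖ < r <;> simp [hF, Set.indicator, norm_smul, hw]
    rw [h1, lintegral_polar_iterated]
    · refine setLIntegral_congr_fun measurableSet_Ioi fun t ht => ?_
      have ht' : (0 : ℝ) < t := ht
      have hn2 : 2 * n - 1 = (2 * n - 2) + 1 := by omega
      have h2 : ∀ θ : ℝ, ‖(t : ℂ) * unitArg θ‖ = t := fun θ => by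
        rw [norm_mul, norm_unitArg, mul_one, Complex.norm_real, Real.norm_of_nonneg ht'.le]
      have h3 : ∀ θ : ℝ, ((t : ℂ) * unitArg θ) • (v : EuclideanSpace ℂ (Fin n)) =
          unitArg θ • t • (v : EuclideanSpace ℂ (Fin n)) := fun θ => by
        rw [mul_comm, mul_smul, Complex.coe_smul]
      simp only [h2, h3]
      rw [lintegral_const_mul, ← mul_assoc, ← ENNReal.ofReal_mul ht'.le, hn2, pow_succ, mul_comm t]
      exact hmθ _
    · exact (Continuous.measurable (by fun_prop)).ennreal_ofReal.mul hmv
  simp_rw [key]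
  rw [← hσ _ hGm, hG, ← mul_assoc, ENNReal.inv_mul_cancel, one_mul,
    lintegral_indicator measurableSet_ball]
  · simp [Real.pi_pos]
  · exact ENNReal.ofReal_ne_top
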